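/- Let L be a right Leibniz algebra over a field of characteristic ≠ 2 and B a two-sided ideal of L that is Es_k-right nil for some integer k ≥ 1. Then every product of elements of L (parenthesized in an arbitrary way) having at least 4k² − 2k + 1 factors in B belongs to the two-sided ideal of L generated by (B^k)_{(L,k)}; equivalently, B^{⟨4k² − 2k + 1⟩} is contained in the ideal generated by (B^k)_{(L,k)}. -/

import Mathlib

open Classical

/-- The binary product `mul` is bilinear over `F`. -/
def IsBilin (F : Type*) [Field F] {L : Type*} [AddCommGroup L] [Module F L]
    (mul : L → L → L) : Prop :=
  (∀ a b c : L, mul (a + b) c = mul a c + mul b c) ∧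
  (∀ a b c : L, mul a (b + c) = mul a b + mul a c) ∧
  (∀ (r : F) (a b : L), mul (r • a) b = r • mul a b) ∧
  (∀ (r : F) (a b : L), mul a (r • b) = r • mul a b)

/-- The (right) Leibniz identity: `a(bc) = (ab)c - (ac)b`. -/
def IsRightLeibniz {L : Type*} [AddCommGroup L] (mul : L → L → L) : Prop :=
  ∀ a b c : L, mul a (mul b c) = mul (mul a b) c - mul (mul a c) b

/-- The left Leibniz identity: `a(bc) = (ab)c + b(ac)`. -/
def IsLeftLeibniz {L : Type*} [AddCommGroup L] (mul : L → L → L) : Prop :=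
  ∀ a b c : L, mul a (mul b c) = mul (mul a b) c + mul b (mul a c)

/-- `B` is a two-sided ideal: `xb ∈ B` and `bx ∈ B` for all `x ∈ L`, `b ∈ B`. -/
def IsIdeal {F : Type*} [Field F] {L : Type*} [AddCommGroup L] [Module F L]
    (mul : L → L → L) (B : Submodule F L) : Prop :=
  ∀ (x b : L), b ∈ B → mul x b ∈ B ∧ mul b x ∈ B

/-- `Ess F mul`: the two-sided ideal of `L` generated by the squares `{xx : x ∈ L}`. -/
def Ess (F : Type*) [Field F] {L : Type*} [AddCommGroup L] [Module F L]
    (mul : L → L → L) : Submodule F L :=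
  sInf {I : Submodule F L | (∀ x : L, mul x x ∈ I) ∧ IsIdeal mul I}

/-- The two-sided ideal of `L` generated by a subspace `S`. -/
def idealClosure (F : Type*) [Field F] {L : Type*} [AddCommGroup L] [Module F L]
    (mul : L → L → L) (S : Submodule F L) : Submodule F L :=
  sInf {I : Submodule F L | S ≤ I ∧ IsIdeal mul I}

/-- Right powers: `B^0 = L` (convention), `B^1 = B`,
`B^{n+1} = span {bc : b ∈ B^n, c ∈ B}`. -/
def rpow (F : Type*) [Field F] {L : Type*} [AddCommGroup L] [Module F L]
    (mul : L → L → L) (B : Submodule F L) : ℕ → Submodule F L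
  | 0 => ⊤
  | 1 => B
  | n + 2 => Submodule.span F
      {x : L | ∃ b ∈ rpow F mul B (n + 1), ∃ c ∈ B, x = mul b c}

/-- Left powers: `^0B = L` (convention), `^1B = B`,
`^{n+1}B = span {bc : b ∈ B, c ∈ ^nB}`. -/
def lpow (F : Type*) [Field F] {L : Type*} [AddCommGroup L] [Module F L]
    (mul : L → L → L) (B : Submodule F L) : ℕ → Submodule F L
  | 0 => ⊤
  | 1 => B
  | n + 2 => Submodule.span F
      {x : L | ∃ b ∈ B, ∃ c ∈ lpow F mul B (n + 1), x = mul b c}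

/-- The right-normed product `rightProd mul a [b₁, …, bₖ] = ((…(a b₁)…) bₖ)`,
with all parentheses associated to the left. -/
def rightProd {L : Type*} (mul : L → L → L) : L → List L → L
  | a, [] => a
  | a, b :: l => rightProd mul (mul a b) l

/-- `D_{(L,k)}`: the span of all right-normed products `d a_k ⋯ a_1`
with `d ∈ D` and `a_i ∈ L`. -/
def rightMulSpan (F : Type*) [Field F] {L : Type*} [AddCommGroup L] [Module F L]
    (mul : L → L → L) (D : Submodule F L) (k : ℕ) : Submodule F L :=
  Submodule.span F
    {x : L | ∃ d ∈ D, ∃ l : List L, l.length = k ∧ x = rightProd mul d l}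

/-- A formal nonassociative product (a word of elements of `L` parenthesized
in an arbitrary way). -/
inductive PTree (L : Type*) where
  | leaf : L → PTree L
  | node : PTree L → PTree L → PTree L

/-- Evaluation of a parenthesized product in `L`. -/
def PTree.eval {L : Type*} (mul : L → L → L) : PTree L → L
  | .leaf a => a
  | .node s t => mul (PTree.eval mul s) (PTree.eval mul t)

/-- The list of factors of a parenthesized product, in order. -/
def PTree.leaves {L : Type*} : PTree L → List L
  | .leaf a => [a]
  | .node s t => s.leaves ++ t.leaves

/-- The length (number of factors) of a parenthesized product. -/
def PTree.length {L : Type*} (t : PTree L) : ℕ := t.leaves.length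

/-- The weight of a parenthesized product with respect to `B`:
the number of its factors lying in `B`. -/
noncomputable def PTree.weight {F : Type*} [Field F] {L : Type*} [AddCommGroup L]
    [Module F L] (B : Submodule F L) (t : PTree L) : ℕ :=
  t.leaves.countP (fun y => decide (y ∈ B))

/-- `B^{⟨n⟩}`: the span of all products of elements of `L` of weight at least `n`
with respect to `B`. -/
noncomputable def weightSpan (F : Type*) [Field F] {L : Type*} [AddCommGroup L]
    [Module F L] (mul : L → L → L) (B : Submodule F L) (n : ℕ) : Submodule F L :=
  Submodule.span F
    {x : L | ∃ t : PTree L, n ≤ PTree.weight B t ∧ x = PTree.eval mul t}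

/-- `B^{{n}}`: the span of all length-`n` products all of whose factors lie in `B`. -/
def lengthSpanIn (F : Type*) [Field F] {L : Type*} [AddCommGroup L] [Module F L]
    (mul : L → L → L) (B : Submodule F L) (n : ℕ) : Submodule F L :=
  Submodule.span F
    {x : L | ∃ t : PTree L, PTree.length t = n ∧ (∀ a ∈ PTree.leaves t, a ∈ B) ∧
      x = PTree.eval mul t}

/-- Iterated right multiples by arbitrary elements. -/
def rIter (F : Type*) [Field F] {L : Type*} [AddCommGroup L] [Module F L]
    (mul : L → L → L) (D : Submodule F L) : ℕ → Submodule F L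
  | 0 => D
  | n + 1 => Submodule.span F {x : L | ∃ b ∈ rIter F mul D n, ∃ c : L, x = mul b c}

theorem bilin_zero_left {F : Type*} [Field F] {L : Type*} [AddCommGroup L] [Module F L]
    {mul : L → L → L} (h : IsBilin F mul) (c : L) : mul 0 c = 0 := by
  have := h.2.2.1 0 0 c
  simpa using this

/-- Right multiplication on a span. -/
theorem span_mul_mem {F : Type*} [Field F] {L : Type*} [AddCommGroup L] [Module F L]
    {mul : L → L → L} (h : IsBilin F mul) {S : Set L} {T : Submodule F L} {c : L}
    (hS : ∀ x ∈ S, mul x c ∈ T) : ∀ x ∈ Submodule.span F S, mul x c ∈ T := by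
  intro x hx
  induction hx using Submodule.span_induction with
  | mem x hx => exact hS x hx
  | zero => rw [bilin_zero_left h]; exact T.zero_mem
  | add x y _ _ hx hy => rw [h.1]; exact T.add_mem hx hy
  | smul r x _ hx => rw [h.2.2.1]; exact T.smul_mem r hx

theorem rpow_mul_mem {F : Type*} [Field F] {L : Type*} [AddCommGroup L] [Module F L]
    {mul : L → L → L} (h : IsBilin F mul) (hleib : IsRightLeibniz mul)
    {B : Submodule F L} (hB : IsIdeal mul B) (n : ℕ) :
    ∀ x ∈ rpow F mul B n, ∀ c, mul x c ∈ rpow F mul B n := by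
  induction n with
  | zero => intro x _ c; simp [rpow]
  | succ n ih =>
    cases n with
    | zero => intro x hx c; exact (hB c x hx).2
    | succ n =>
      intro x hx c
      refine span_mul_mem h (T := rpow F mul B (n + 2)) ?_ x hx
      rintro _ ⟨b, hb, d, hd, rfl⟩
      have e : mul (mul b d) c = mul b (mul d c) + mul (mul b c) d := by
        rw [hleib b d c]; abel
      rw [e]
      exact Submodule.add_mem _ (Submodule.subset_span ⟨b, hb, _, (hB c d hd).2, rfl⟩)
        (Submodule.subset_span ⟨_, ih b hb c, d, hd, rfl⟩)

theorem rpow_mul_B {F : Type*} [Field F] {L : Type*} [AddCommGroup L] [Module F L]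
    {mul : L → L → L} {B : Submodule F L} (hB : IsIdeal mul B) (n : ℕ) :
    ∀ x ∈ rpow F mul B n, ∀ c ∈ B, mul x c ∈ rpow F mul B (n + 1) := by
  intro x hx c hc
  cases n with
  | zero => exact (hB x c hc).1
  | succ n => exact Submodule.subset_span ⟨x, hx, c, hc, rfl⟩

theorem rIter_succ_le {F : Type*} [Field F] {L : Type*} [AddCommGroup L] [Module F L]
    {mul : L → L → L} {D : Submodule F L} (hD : ∀ x ∈ D, ∀ c, mul x c ∈ D) (n : ℕ) :
    rIter F mul D (n + 1) ≤ rIter F mul D n := by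
  induction n with
  | zero =>
    refine Submodule.span_le.2 ?_
    rintro _ ⟨b, hb, c, rfl⟩
    exact hD b hb c
  | succ n ih =>
    refine Submodule.span_le.2 ?_
    rintro _ ⟨b, hb, c, rfl⟩
    exact Submodule.subset_span ⟨b, ih hb, c, rfl⟩

theorem rIter_anti {F : Type*} [Field F] {L : Type*} [AddCommGroup L] [Module F L]
    {mul : L → L → L} {D : Submodule F L} (hD : ∀ x ∈ D, ∀ c, mul x c ∈ D) :
    Antitone (rIter F mul D) := antitone_nat_of_succ_le (rIter_succ_le hD)

theorem rightProd_concat {L : Type*} (mul : L → L → L) (l : List L) (c : L) :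
    ∀ d, rightProd mul d (l ++ [c]) = mul (rightProd mul d l) c := by
  induction l with
  | nil => intro d; rfl
  | cons a l ih => intro d; exact ih _

theorem rIter_le {F : Type*} [Field F] {L : Type*} [AddCommGroup L] [Module F L]
    {mul : L → L → L} (h : IsBilin F mul) (D : Submodule F L) (n : ℕ) :
    rIter F mul D n ≤ rightMulSpan F mul D n := by
  induction n with
  | zero => intro x hx; exact Submodule.subset_span ⟨x, hx, [], rfl, rfl⟩
  | succ n ih =>
    refine Submodule.span_le.2 ?_
    rintro _ ⟨b, hb, c, rfl⟩
    refine span_mul_mem h (T := rightMulSpan F mul D (n + 1)) ?_ b (ih hb)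
    rintro _ ⟨d, hd, l, hl, rfl⟩
    exact Submodule.subset_span ⟨d, hd, l ++ [c], by simp [hl], (rightProd_concat mul l c d).symm⟩

theorem filt_mul {F : Type*} [Field F] {L : Type*} [AddCommGroup L] [Module F L]
    {mul : L → L → L} (hleib : IsRightLeibniz mul) {B : Submodule F L}
    (N : ℕ → Submodule F L) (h1 : ∀ j, ∀ x ∈ N j, ∀ c, mul x c ∈ N j)
    (h2 : ∀ j, ∀ x ∈ N j, ∀ c ∈ B, mul x c ∈ N (j + 1)) (t : PTree L) :
    ∀ j, ∀ x ∈ N j, mul x (t.eval mul) ∈ N (j + t.weight B) := by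
  induction t with
  | leaf a =>
    intro j x hx
    by_cases ha : a ∈ B
    · simpa [PTree.weight, PTree.leaves, PTree.eval, ha] using h2 j x hx a ha
    · simpa [PTree.weight, PTree.leaves, PTree.eval, ha] using h1 j x hx a
  | node s t hs ht =>
    intro j x hx
    have w : (PTree.node s t).weight B = s.weight B + t.weight B := by
      simp [PTree.weight, PTree.leaves]
    rw [w, PTree.eval, hleib]
    refine Submodule.sub_mem _ ?_ ?_
    · rw [← add_assoc]; exact ht _ _ (hs _ _ hx)
    · rw [add_comm (s.weight B), ← add_assoc]; exact hs _ _ (ht _ _ hx)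

theorem filt_eval {F : Type*} [Field F] {L : Type*} [AddCommGroup L] [Module F L]
    {mul : L → L → L} (hleib : IsRightLeibniz mul) {B : Submodule F L}
    (N : ℕ → Submodule F L) (h0 : N 0 = ⊤) (hN1 : B ≤ N 1)
    (h1 : ∀ j, ∀ x ∈ N j, ∀ c, mul x c ∈ N j)
    (h2 : ∀ j, ∀ x ∈ N j, ∀ c ∈ B, mul x c ∈ N (j + 1)) (t : PTree L) :
    t.eval mul ∈ N (t.weight B) := by
  induction t with
  | leaf a =>
    by_cases ha : a ∈ B
    · simpa [PTree.weight, PTree.leaves, PTree.eval, ha] using hN1 ha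
    · simp [PTree.weight, PTree.leaves, ha, h0]
  | node s t hs _ =>
    have w : (PTree.node s t).weight B = s.weight B + t.weight B := by
      simp [PTree.weight, PTree.leaves]
    rw [w]
    exact filt_mul hleib N h1 h2 t _ _ hs

/-- If `B` is `Es_k`-right nil, then `B^{⟨4k² - 2k + 1⟩}` is
contained in the two-sided ideal of `L` generated by `(B^k)_{(L,k)}`. -/
theorem weightSpan_le_idealClosure
    {F : Type*} [Field F] {L : Type*} [AddCommGroup L] [Module F L]
    (h2 : (2 : F) ≠ 0) (mul : L → L → L)
    (hbil : IsBilin F mul) (hleib : IsRightLeibniz mul)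
    (k : ℕ) (hk : 1 ≤ k)
    (B : Submodule F L) (hB : IsIdeal mul B)
    (hnil : rightMulSpan F mul (B ⊓ Ess F mul) k = ⊥) :
    weightSpan F mul B (4 * k ^ 2 - 2 * k + 1) ≤
      idealClosure F mul (rightMulSpan F mul (rpow F mul B k) k) := by
  have hR := rpow_mul_mem hbil hleib hB
  refine Submodule.span_le.2 ?_
  rintro _ ⟨t, ht, rfl⟩
  have key := filt_eval (mul := mul) hleib (B := B)
    (fun j => rIter F mul (rpow F mul B (min j k)) (j - k)) (by simp [rIter, rpow])
    (by
      have e1 : min 1 k = 1 := by omega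
      have e2 : 1 - k = 0 := by omega
      simp only [e1, e2]
      exact le_refl B)
    (fun j x hx c => rIter_succ_le (hR _) _ (Submodule.subset_span ⟨x, hx, c, rfl⟩))
    (fun j x hx c hc => by
      rcases lt_or_ge j k with hj | hj
      · have e1 : min j k = j := by omega
        have e2 : j - k = 0 := by omega
        have e3 : min (j + 1) k = j + 1 := by omega
        have e4 : j + 1 - k = 0 := by omega
        simp only [e1, e2] at hx
        simp only [e3, e4]
        exact rpow_mul_B hB j x hx c hc
      · have e1 : min j k = k := by omega
        have e3 : min (j + 1) k = k := by omega
        have e4 : j + 1 - k = (j - k) + 1 := by omega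
        simp only [e1] at hx
        simp only [e3, e4]
        exact Submodule.subset_span ⟨x, hx, c, rfl⟩) t
  have hw : 2 * k ≤ t.weight B := by
    refine le_trans ?_ ht
    have : k ≤ k ^ 2 := by nlinarith
    omega
  have e1 : min (t.weight B) k = k := by omega
  simp only [e1] at key
  have key2 := rIter_le hbil _ _ (rIter_anti (hR k) (show k ≤ t.weight B - k by omega) key)
  exact (le_sInf fun I hI => hI.1 : rightMulSpan F mul (rpow F mul B k) k ≤ _) key2
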